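/- arXiv:2605.22257 — 2 statements merged into one kernel-verified Lean document; each statement's English description precedes it below -/
import Mathlib

section
/- Let S be a random variable on a probability space taking values in [0,1], and let N be a positive natural number. For each positive divisor K of N define the ensemble success probability s̄(K,N) = 1 − (E[(1−S)^(N/K)])^K. Then for any positive divisors K ≤ K' of N, s̄(K,N) ≤ s̄(K',N). -/
open MeasureTheory

/-!
The argument compares `m` attempts on each of `K` variants with `m'` attempts on each of `K' ≥ K`
variants, where `m * K ≤ m' * K'`. The failure probability `X = 1 - S` lies in `[0, 1]`, so
`(X ^ m') ^ K' ≤ (X ^ m) ^ K`, that is, `(X ^ m') ^ (K' / K) ≤ X ^ m`. As `K' / K ≥ 1`, Jensen's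
inequality for `x ↦ x ^ (K' / K)` gives `(E[X ^ m']) ^ (K' / K) ≤ E[X ^ m]`, and it remains to take
`K`-th powers.
-/

section Jensen

variable {Ω : Type*} [MeasurableSpace Ω] {μ : Measure Ω} [IsProbabilityMeasure μ] {f g : Ω → ℝ}

theorem rpow_integral_le_integral_rpow {p : ℝ} (hp : 1 ≤ p) (hf0 : 0 ≤ᵐ[μ] f)
    (hf : Integrable f μ) (hfp : Integrable (fun ω ↦ f ω ^ p) μ) :
    (∫ ω, f ω ∂μ) ^ p ≤ ∫ ω, f ω ^ p ∂μ :=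
  (convexOn_rpow hp).map_integral_le
    (Real.continuous_rpow_const (zero_le_one.trans hp)).continuousOn isClosed_Ici hf0 hf hfp

theorem pow_integral_le_pow_integral_of_pow_le_pow {k l : ℕ} (hk : k ≠ 0) (hkl : k ≤ l)
    (hf0 : 0 ≤ᵐ[μ] f) (hg0 : 0 ≤ᵐ[μ] g) (hf : Integrable f μ) (hg : Integrable g μ)
    (hfg : ∀ᵐ ω ∂μ, f ω ^ l ≤ g ω ^ k) :
    (∫ ω, f ω ∂μ) ^ l ≤ (∫ ω, g ω ∂μ) ^ k := by
  have one_le_exponent : (1 : ℝ) ≤ l / k := by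
    rw [one_le_div₀ (by positivity)]
    exact_mod_cast hkl
  have rpow_div_pow {x : ℝ} (hx : 0 ≤ x) : (x ^ (l / k : ℝ)) ^ k = x ^ l := by
    rw [← Real.rpow_mul_natCast hx, div_mul_cancel₀ _ (by positivity), Real.rpow_natCast]
  have f_rpow_le_g : ∀ᵐ ω ∂μ, f ω ^ (l / k : ℝ) ≤ g ω := by
    filter_upwards [hf0, hg0, hfg] with ω hfω hgω hfgω
    exact le_of_pow_le_pow_left₀ hk hgω ((rpow_div_pow hfω).trans_le hfgω)
  have integrable_f_rpow : Integrable (fun ω ↦ f ω ^ (l / k : ℝ)) μ := by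
    refine hg.mono' (hf.aemeasurable.pow_const _).aestronglyMeasurable ?_
    filter_upwards [hf0, f_rpow_le_g] with ω hfω hω
    rwa [Real.norm_of_nonneg (Real.rpow_nonneg hfω _)]
  have integral_f_nonneg : 0 ≤ ∫ ω, f ω ∂μ := integral_nonneg_of_ae hf0
  calc (∫ ω, f ω ∂μ) ^ l
      = ((∫ ω, f ω ∂μ) ^ (l / k : ℝ)) ^ k := (rpow_div_pow integral_f_nonneg).symm
    _ ≤ (∫ ω, f ω ^ (l / k : ℝ) ∂μ) ^ k := by
        gcongr
        exact rpow_integral_le_integral_rpow one_le_exponent hf0 hf integrable_f_rpow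
    _ ≤ (∫ ω, g ω ∂μ) ^ k := by
        refine pow_le_pow_left₀ (integral_nonneg_of_ae ?_)
          (integral_mono_ae integrable_f_rpow hg f_rpow_le_g) k
        filter_upwards [hf0] with ω hfω using Real.rpow_nonneg hfω _

end Jensen

theorem ensemble_success_monotone_general {Ω : Type*} [MeasurableSpace Ω]
    (P : Measure Ω) [IsProbabilityMeasure P]
    (S : Ω → ℝ) (hS : AEMeasurable S P) (hS01 : ∀ᵐ ω ∂P, S ω ∈ Set.Icc 0 1)
    {m m' K K' : ℕ} (hK : 0 < K) (hKK' : K ≤ K') (hm : m * K ≤ m' * K') :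
    1 - (∫ ω, (1 - S ω) ^ m ∂P) ^ K ≤ 1 - (∫ ω, (1 - S ω) ^ m' ∂P) ^ K' := by
  have failure_mem : ∀ᵐ ω ∂P, 1 - S ω ∈ Set.Icc 0 1 := by
    filter_upwards [hS01] with ω hω using Set.Icc.one_sub_mem hω
  have failure_pow_mem (n : ℕ) : ∀ᵐ ω ∂P, (1 - S ω) ^ n ∈ Set.Icc 0 1 := by
    filter_upwards [failure_mem] with ω hω using ⟨pow_nonneg hω.1 n, pow_le_one₀ hω.1 hω.2⟩
  have failure_pow_nonneg (n : ℕ) : 0 ≤ᵐ[P] fun ω ↦ (1 - S ω) ^ n :=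
    (failure_pow_mem n).mono fun _ h ↦ h.1
  have integrable_failure_pow (n : ℕ) : Integrable (fun ω ↦ (1 - S ω) ^ n) P :=
    .of_mem_Icc 0 1 ((hS.const_sub 1).pow_const n) (failure_pow_mem n)
  refine sub_le_sub_left (pow_integral_le_pow_integral_of_pow_le_pow hK.ne' hKK'
    (failure_pow_nonneg m') (failure_pow_nonneg m)
    (integrable_failure_pow m') (integrable_failure_pow m) ?_) 1
  filter_upwards [failure_mem] with ω hω
  rw [← pow_mul, ← pow_mul]
  exact pow_le_pow_of_le_one hω.1 hω.2 hm

/-- Proposition 5.2 (Monotonicity): the ensemble success probability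
`s̄(K,N) = 1 − (E[(1−S)^(N/K)])^K` is monotone in the divisor `K` of `N`. -/
theorem ensemble_success_monotone {Ω : Type*} [MeasurableSpace Ω]
    (P : Measure Ω) [IsProbabilityMeasure P]
    (S : Ω → ℝ) (hS : Measurable S)
    (hS0 : ∀ ω, 0 ≤ S ω) (hS1 : ∀ ω, S ω ≤ 1)
    (N K K' : ℕ) (hN : 0 < N) (hK : 0 < K) (hK' : 0 < K')
    (hKdvd : K ∣ N) (hK'dvd : K' ∣ N) (hKK' : K ≤ K') :
    1 - (∫ ω, (1 - S ω) ^ (N / K) ∂P) ^ K ≤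
      1 - (∫ ω, (1 - S ω) ^ (N / K') ∂P) ^ K' :=
  ensemble_success_monotone_general P S hS.aemeasurable (.of_forall fun ω ↦ ⟨hS0 ω, hS1 ω⟩) hK hKK'
    ((Nat.div_mul_le_self N K).trans_eq (Nat.div_mul_cancel hK'dvd).symm)
end

section
/- Let S be a random variable on a probability space taking values in [0,1] that is not almost surely constant, let N be a positive natural number, and let K < K' be positive divisors of N. Then 1 − (E[(1−S)^(N/K)])^K < 1 − (E[(1−S)^(N/K')])^(K'), i.e. the ensemble success probability is strictly larger for K' than for K. -/
open MeasureTheory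

/-!
Put `X = 1 - S`, `m = N / K'` and `n = N / K`, so that `m < n` and `m / n = K / K'`. Since
`x ↦ x ^ (m / n)` is strictly concave on `[0, ∞)`, Jensen's inequality for the non-constant variable
`X ^ n` reads `E[X ^ m] < E[X ^ n] ^ (K / K')`; now raise both sides to the power `K'`.
-/

section StrictJensen

variable {Ω : Type*} [MeasurableSpace Ω] {μ : Measure Ω} {X : Ω → ℝ}

lemma ae_eq_const_of_rpow_ae_eq_const {p c : ℝ} (hp : p ≠ 0) (hX0 : 0 ≤ᵐ[μ] X)
    (hXc : ∀ᵐ ω ∂μ, X ω ^ p = c) : ∀ᵐ ω ∂μ, X ω = c ^ p⁻¹ := by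
  filter_upwards [hX0, hXc] with ω hω0 hωc
  rw [← hωc, Real.rpow_rpow_inv hω0 hp]

lemma integrable_rpow_of_le_one [IsFiniteMeasure μ] {s : ℝ} (hs0 : 0 ≤ s) (hs1 : s ≤ 1)
    (hX0 : 0 ≤ᵐ[μ] X) (hX : Integrable X μ) : Integrable (fun ω ↦ X ω ^ s) μ := by
  have hnorm : Integrable (fun ω ↦ ‖X ω‖ ^ s) μ :=
    integrable_norm_rpow_of_le hX.aestronglyMeasurable hs0 zero_le_one hs1
      (by simpa only [Real.rpow_one] using hX.norm)
  exact hnorm.congr (hX0.mono fun ω hω0 ↦ by simp only [Real.norm_of_nonneg hω0])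

variable [IsProbabilityMeasure μ]

lemma integral_rpow_lt_rpow_integral {s : ℝ} (hs0 : 0 < s) (hs1 : s < 1)
    (hX0 : 0 ≤ᵐ[μ] X) (hX : Integrable X μ) (hXnc : ¬ ∃ c, ∀ᵐ ω ∂μ, X ω = c) :
    ∫ ω, X ω ^ s ∂μ < (∫ ω, X ω ∂μ) ^ s := by
  have jensen := (Real.strictConcaveOn_rpow hs0 hs1).ae_eq_const_or_lt_map_average
    (Real.continuous_rpow_const hs0.le).continuousOn isClosed_Ici hX0 hX
    (integrable_rpow_of_le_one hs0.le hs1.le hX0 hX)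
  simp only [average_eq_integral] at jensen
  exact jensen.resolve_left fun hXc ↦ hXnc ⟨_, hXc⟩

lemma integral_rpow_lt_rpow_integral_rpow {p q : ℝ} (hp : 0 < p) (hpq : p < q)
    (hX0 : 0 ≤ᵐ[μ] X) (hXq : Integrable (fun ω ↦ X ω ^ q) μ)
    (hXnc : ¬ ∃ c, ∀ᵐ ω ∂μ, X ω = c) :
    ∫ ω, X ω ^ p ∂μ < (∫ ω, X ω ^ q ∂μ) ^ (p / q) := by
  have hq : 0 < q := hp.trans hpq
  have hXq0 : 0 ≤ᵐ[μ] fun ω ↦ X ω ^ q := hX0.mono fun ω hω0 ↦ Real.rpow_nonneg hω0 q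
  have hXqnc : ¬ ∃ c, ∀ᵐ ω ∂μ, X ω ^ q = c := fun ⟨_, hXqc⟩ ↦
    hXnc ⟨_, ae_eq_const_of_rpow_ae_eq_const hq.ne' hX0 hXqc⟩
  have rpow_eq : (fun ω ↦ X ω ^ p) =ᵐ[μ] fun ω ↦ (X ω ^ q) ^ (p / q) := by
    filter_upwards [hX0] with ω hω0
    rw [← Real.rpow_mul hω0, mul_div_cancel₀ p hq.ne']
  rw [integral_congr_ae rpow_eq]
  exact integral_rpow_lt_rpow_integral (div_pos hp hq) ((div_lt_one hq).2 hpq) hXq0 hXq hXqnc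

lemma pow_integral_pow_lt_pow_integral_pow {m n k l : ℕ} (hm : 0 < m) (hkl : k < l)
    (hmul : m * l = n * k) (hX0 : 0 ≤ᵐ[μ] X)
    (hXn : Integrable (fun ω ↦ X ω ^ n) μ) (hXnc : ¬ ∃ c, ∀ᵐ ω ∂μ, X ω = c) :
    (∫ ω, X ω ^ m ∂μ) ^ l < (∫ ω, X ω ^ n ∂μ) ^ k := by
  have hmn : m < n := by
    by_contra! hnm
    exact (Nat.mul_lt_mul_of_le_of_lt hnm hkl hm).ne' hmul
  have moment_nonneg (i : ℕ) : 0 ≤ ∫ ω, X ω ^ i ∂μ :=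
    integral_nonneg_of_ae (hX0.mono fun ω hω0 ↦ pow_nonneg hω0 i)
  have lyapunov : ∫ ω, X ω ^ m ∂μ < (∫ ω, X ω ^ n ∂μ) ^ (m / n : ℝ) := by
    simpa only [Real.rpow_natCast] using
      integral_rpow_lt_rpow_integral_rpow (p := m) (q := n) (by exact_mod_cast hm)
        (by exact_mod_cast hmn) hX0 (by simpa only [Real.rpow_natCast] using hXn) hXnc
  have hexp : (m / n : ℝ) * l = k := by
    have hn : (n : ℝ) ≠ 0 := by exact_mod_cast (hm.trans hmn).ne'
    rw [div_mul_eq_mul_div, div_eq_iff hn, mul_comm (k : ℝ)]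
    exact_mod_cast hmul
  calc (∫ ω, X ω ^ m ∂μ) ^ l
      < ((∫ ω, X ω ^ n ∂μ) ^ (m / n : ℝ)) ^ l :=
        pow_lt_pow_left₀ lyapunov (moment_nonneg m) (Nat.ne_zero_of_lt hkl)
    _ = (∫ ω, X ω ^ n ∂μ) ^ k := by
      rw [← Real.rpow_mul_natCast (moment_nonneg n), hexp, Real.rpow_natCast]

end StrictJensen

/-- Strict part of Proposition 5.2: if `S` is not almost surely constant and
`K < K'` are positive divisors of `N`, the ensemble success probability is
strictly larger for `K'` than for `K`. -/
theorem ensemble_success_strict_mono {Ω : Type*} [MeasurableSpace Ω]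
    (P : Measure Ω) [IsProbabilityMeasure P]
    (S : Ω → ℝ) (hS : Measurable S)
    (hS0 : ∀ ω, 0 ≤ S ω) (hS1 : ∀ ω, S ω ≤ 1)
    (hSnc : ¬ ∃ c : ℝ, ∀ᵐ ω ∂P, S ω = c)
    (N K K' : ℕ) (hN : 0 < N) (hK : 0 < K) (hK' : 0 < K')
    (hKdvd : K ∣ N) (hK'dvd : K' ∣ N) (hKK' : K < K') :
    1 - (∫ ω, (1 - S ω) ^ (N / K) ∂P) ^ K <
      1 - (∫ ω, (1 - S ω) ^ (N / K') ∂P) ^ K' := by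
  have hX0 (ω : Ω) : 0 ≤ 1 - S ω := sub_nonneg.2 (hS1 ω)
  have hXint : Integrable (fun ω ↦ (1 - S ω) ^ (N / K)) P :=
    .of_mem_Icc 0 1 (by fun_prop) <| ae_of_all _ fun ω ↦
      ⟨pow_nonneg (hX0 ω) _, pow_le_one₀ (hX0 ω) (sub_le_self 1 (hS0 ω))⟩
  have hXnc : ¬ ∃ c, ∀ᵐ ω ∂P, 1 - S ω = c := fun ⟨c, hXc⟩ ↦
    hSnc ⟨1 - c, hXc.mono fun ω hω ↦ by rw [← hω, sub_sub_cancel]⟩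
  have hdiv_pos : 0 < N / K' := Nat.div_pos (Nat.le_of_dvd hN hK'dvd) hK'
  have hmul : N / K' * K' = N / K * K := by
    rw [Nat.div_mul_cancel hK'dvd, Nat.div_mul_cancel hKdvd]
  exact sub_lt_sub_left (pow_integral_pow_lt_pow_integral_pow hdiv_pos hKK' hmul
    (ae_of_all _ hX0) hXint hXnc) 1
end
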